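/- arXiv:1304.0563 — 6 statements merged into one kernel-verified Lean document; each statement's English description precedes it below -/
import Mathlib

section
/- Let n ≥ 2, let T be any n×n complex Toeplitz matrix (T_{ij} depends only on i − j), let H be any n×n complex Hankel matrix (H_{ij} depends only on i + j), and let μ = (μ1, μ2, μ3, μ4) ∈ ℂ^4. Then rank((T + H) X_μ − X_μ (T + H)) ≤ 8. -/
/-!
Write `A = T + H`. Apart from its first and last rows, and its first two and last two columns,
`X_μ` agrees with the adjacency matrix of a path. Away from those rows and columns the entry
`(i, j)` of the commutator is therefore
`A i (j - 1) + A i (j + 1) - A (i - 1) j - A (i + 1) j`, which vanishes both for Toeplitz and for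
Hankel matrices. So the commutator is supported on 2 rows and 4 columns, and its rank is at most
`2 + 4 = 6`.
-/

open Matrix

/-- The generator `X_μ` of the trigonometric algebras. -/
def Xmu (n : ℕ) (μ1 μ2 μ3 μ4 : ℂ) : Matrix (Fin n) (Fin n) ℂ :=
  Matrix.of fun (i j : Fin n) =>
    if (i : ℕ) = 0 ∧ (j : ℕ) = 0 then μ1
    else if (i : ℕ) = 0 ∧ (j : ℕ) = 1 then μ2
    else if (i : ℕ) = n - 1 ∧ (j : ℕ) = n - 2 then μ3
    else if (i : ℕ) = n - 1 ∧ (j : ℕ) = n - 1 then μ4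
    else if (j : ℕ) = (i : ℕ) + 1 ∨ (i : ℕ) = (j : ℕ) + 1 then 1
    else 0

lemma matrix_rank_add_le {n : ℕ} (A B : Matrix (Fin n) (Fin n) ℂ) :
    (A + B).rank ≤ A.rank + B.rank := by
  unfold Matrix.rank
  rw [Matrix.mulVecLin_add]
  exact (Submodule.finrank_mono (LinearMap.range_add_le _ _)).trans
    (Submodule.finrank_add_le_finrank_add_finrank _ _)

/-- A matrix supported on the union of the rows in `R` and the columns in `C` has rank at most
`#R + #C`. -/
lemma rank_le_card_add_card {n : ℕ} (M : Matrix (Fin n) (Fin n) ℂ) (R C : Finset (Fin n))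
    (hM : ∀ i j, i ∉ R → j ∉ C → M i j = 0) : M.rank ≤ R.card + C.card := by
  let ind : Finset (Fin n) → Matrix (Fin n) (Fin n) ℂ :=
    fun S => Matrix.diagonal fun i => if i ∈ S then 1 else 0
  have rank_ind (S : Finset (Fin n)) : (ind S).rank = S.card := by
    simp [ind, Matrix.rank_diagonal]
  have hdec : M = ind R * M + (M - ind R * M) * ind C := by
    ext i j
    simp only [ind, Matrix.add_apply, Matrix.sub_apply, Matrix.diagonal_mul,
      Matrix.mul_diagonal]
    by_cases hi : i ∈ R <;> by_cases hj : j ∈ C <;> simp [hi, hj]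
    exact hM i j hi hj
  calc M.rank = (ind R * M + (M - ind R * M) * ind C).rank := by rw [← hdec]
    _ ≤ (ind R * M).rank + ((M - ind R * M) * ind C).rank := matrix_rank_add_le _ _
    _ ≤ (ind R).rank + (ind C).rank :=
      add_le_add (Matrix.rank_mul_le_left _ _) (Matrix.rank_mul_le_right _ _)
    _ = R.card + C.card := by rw [rank_ind, rank_ind]

lemma mul_Xmu_apply {n : ℕ} (μ1 μ2 μ3 μ4 : ℂ) (A : Matrix (Fin n) (Fin n) ℂ) (i j : Fin n)
    (h1 : 2 ≤ (j : ℕ)) (h2 : (j : ℕ) + 2 < n) :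
    (A * Xmu n μ1 μ2 μ3 μ4) i j =
      A i ⟨(j : ℕ) - 1, by omega⟩ + A i ⟨(j : ℕ) + 1, by omega⟩ := by
  have hX (k : Fin n) : Xmu n μ1 μ2 μ3 μ4 k j =
      (if k = ⟨(j : ℕ) - 1, by omega⟩ then 1 else 0) +
        (if k = ⟨(j : ℕ) + 1, by omega⟩ then 1 else 0) := by
    simp only [Xmu, Matrix.of_apply, Fin.ext_iff]
    split_ifs <;> first | omega | simp
  simp [Matrix.mul_apply, hX, mul_add, Finset.sum_add_distrib]

lemma Xmu_mul_apply {n : ℕ} (μ1 μ2 μ3 μ4 : ℂ) (A : Matrix (Fin n) (Fin n) ℂ) (i j : Fin n)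
    (h1 : 1 ≤ (i : ℕ)) (h2 : (i : ℕ) + 1 < n) :
    (Xmu n μ1 μ2 μ3 μ4 * A) i j =
      A ⟨(i : ℕ) - 1, by omega⟩ j + A ⟨(i : ℕ) + 1, by omega⟩ j := by
  have hX (k : Fin n) : Xmu n μ1 μ2 μ3 μ4 i k =
      (if k = ⟨(i : ℕ) - 1, by omega⟩ then 1 else 0) +
        (if k = ⟨(i : ℕ) + 1, by omega⟩ then 1 else 0) := by
    simp only [Xmu, Matrix.of_apply, Fin.ext_iff]
    split_ifs <;> first | omega | simp
  simp [Matrix.mul_apply, hX, add_mul, Finset.sum_add_distrib]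

theorem toeplitz_plus_hankel_commutator_Xmu_rank_le_eight
    (n : ℕ) (hn : 2 ≤ n) (μ1 μ2 μ3 μ4 : ℂ) (t : ℤ → ℂ) (h : ℕ → ℂ)
    (T H : Matrix (Fin n) (Fin n) ℂ)
    (hT : T = Matrix.of fun (i j : Fin n) => t ((i : ℤ) - (j : ℤ)))
    (hH : H = Matrix.of fun (i j : Fin n) => h ((i : ℕ) + (j : ℕ))) :
    ((T + H) * Xmu n μ1 μ2 μ3 μ4 - Xmu n μ1 μ2 μ3 μ4 * (T + H)).rank ≤ 8 := by
  let R : Finset (Fin n) := {⟨0, by omega⟩, ⟨n - 1, by omega⟩}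
  let C : Finset (Fin n) :=
    {⟨0, by omega⟩, ⟨1, by omega⟩, ⟨n - 2, by omega⟩, ⟨n - 1, by omega⟩}
  have hR : R.card ≤ 2 := Finset.card_le_two
  have hC : C.card ≤ 4 := Finset.card_le_four
  refine (rank_le_card_add_card _ R C fun i j hi hj => ?_).trans (by omega)
  simp only [R, C, Finset.mem_insert, Finset.mem_singleton, Fin.ext_iff, not_or] at hi hj
  have hi2 := i.isLt
  have hj2 := j.isLt
  have hi0 : 1 ≤ (i : ℕ) := by omega
  have hj0 : 2 ≤ (j : ℕ) := by omega
  rw [Matrix.sub_apply, mul_Xmu_apply _ _ _ _ _ _ _ hj0 (by omega),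
    Xmu_mul_apply _ _ _ _ _ _ _ hi0 (by omega)]
  simp only [hT, hH, Matrix.add_apply, Matrix.of_apply]
  -- the Toeplitz and Hankel terms cancel in crosswise pairs
  have e1 : (i : ℤ) - ((j - 1 : ℕ) : ℤ) = ((i + 1 : ℕ) : ℤ) - (j : ℤ) := by omega
  have e2 : (i : ℤ) - ((j + 1 : ℕ) : ℤ) = ((i - 1 : ℕ) : ℤ) - (j : ℤ) := by omega
  have e3 : (i : ℕ) + (j - 1) = i - 1 + j := by omega
  have e4 : (i : ℕ) + (j + 1) = i + 1 + j := by omega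
  rw [e1, e2, e3, e4]
  ring
end

section
/- Let n ≥ 2 and let a, b ∈ ℂ^n with a_0 = b_0. Then [T_n(a,b), X] = Θ(a,b) − J Θ(a,b)^T J, where Θ(a,b) = e_0 (Π b)^T − (Π a) e_0^T. -/
/-!
Extend the symbol to `t : ℤ → ℂ` with `t k = a (k mod n)` for `k ≥ 0` and `t (-k) = b (k mod n)` for
`k > 0`. Then the Toeplitz matrix has entries `t (i - j)`, and the cyclic shifts are
`(Π a) i = t (i + 1)` and `(Π b) j = t (-(j + 1))`, including the wrap-around at `n - 1`.
Multiplying by `X` adds the two neighbouring entries, so with `t` unrestricted both products have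
entries `t (i - j + 1) + t (i - j - 1)` minus the neighbours falling outside the matrix. In the
commutator the full sums cancel and only boundary terms survive: row and column `0` give `Θ`,
row and column `n - 1` give `-J Θᵀ J`, since conjugation by `J` reverses both indices
(`Jm_conj_apply`).
-/

open Matrix

/-- The Toeplitz matrix with first column `a` and first row `bᵀ` (where `a 0 = b 0`). -/
def Tmat (n : ℕ) (a b : Fin n → ℂ) : Matrix (Fin n) (Fin n) ℂ :=
  Matrix.of fun (i j : Fin n) =>
    if (j : ℕ) ≤ (i : ℕ) then a ⟨(i : ℕ) - (j : ℕ), Nat.lt_of_le_of_lt (Nat.sub_le _ _) i.isLt⟩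
    else b ⟨(j : ℕ) - (i : ℕ), Nat.lt_of_le_of_lt (Nat.sub_le _ _) j.isLt⟩

/-- The symmetric tridiagonal 0–1 matrix `X` generating the tau algebra. -/
def Xtri (n : ℕ) : Matrix (Fin n) (Fin n) ℂ :=
  Matrix.of fun (i j : Fin n) =>
    if (j : ℕ) = (i : ℕ) + 1 ∨ (i : ℕ) = (j : ℕ) + 1 then 1 else 0

/-- The cyclic shift matrix `Π`. -/
def Pim (n : ℕ) : Matrix (Fin n) (Fin n) ℂ :=
  Matrix.of fun (i j : Fin n) =>
    if (j : ℕ) = (i : ℕ) + 1 then 1 else if (i : ℕ) = n - 1 ∧ (j : ℕ) = 0 then 1 else 0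

/-- The reverse identity matrix `J`. -/
def Jm (n : ℕ) : Matrix (Fin n) (Fin n) ℂ :=
  Matrix.of fun (i j : Fin n) => if (i : ℕ) + (j : ℕ) = n - 1 then 1 else 0

/-- The first standard basis vector `e₀`. -/
def e0 (n : ℕ) : Fin n → ℂ := fun i => if (i : ℕ) = 0 then 1 else 0

/-- `Θ(a,b) = e₀ (Π b)ᵀ − (Π a) e₀ᵀ`. -/
noncomputable def Theta (n : ℕ) (a b : Fin n → ℂ) : Matrix (Fin n) (Fin n) ℂ :=
  Matrix.vecMulVec (e0 n) ((Pim n).mulVec b) - Matrix.vecMulVec ((Pim n).mulVec a) (e0 n)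

/-- The Toeplitz symbol, extended to all of `ℤ` cyclically on each side: nonnegative indices read `a`
and negative indices read `b`, modulo `n`. -/
def symb (n : ℕ) (hn : 0 < n) (a b : Fin n → ℂ) (k : ℤ) : ℂ :=
  if 0 ≤ k then a ⟨k.toNat % n, Nat.mod_lt _ hn⟩ else b ⟨(-k).toNat % n, Nat.mod_lt _ hn⟩

lemma Tmat_apply_eq_symb (n : ℕ) (hn : 0 < n) (a b : Fin n → ℂ) (i j : Fin n) :
    Tmat n a b i j = symb n hn a b ((i : ℤ) - j) := by
  have hi := i.isLt
  have hj := j.isLt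
  simp only [Tmat, symb, Matrix.of_apply]
  by_cases h : (j : ℕ) ≤ i
  · rw [if_pos h, if_pos (by omega)]
    congr 2
    rw [Nat.mod_eq_of_lt (by omega)]
    omega
  · rw [if_neg h, if_neg (by omega)]
    congr 2
    rw [Nat.mod_eq_of_lt (by omega)]
    omega

lemma Pim_mulVec_apply (n : ℕ) (hn : 0 < n) (v : Fin n → ℂ) (i : Fin n) :
    (Pim n).mulVec v i = v ⟨((i : ℕ) + 1) % n, Nat.mod_lt _ hn⟩ := by
  have hi := i.isLt
  have key : ∀ k : Fin n, Pim n i k = if k = ⟨((i : ℕ) + 1) % n, Nat.mod_lt _ hn⟩ then 1 else 0 := by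
    intro k
    have hk := k.isLt
    simp only [Pim, Matrix.of_apply, Fin.ext_iff]
    by_cases h : (i : ℕ) + 1 = n
    · rw [h, Nat.mod_self]
      split_ifs <;> first | rfl | omega
    · rw [Nat.mod_eq_of_lt (by omega : (i : ℕ) + 1 < n)]
      split_ifs <;> first | rfl | omega
  simp [Matrix.mulVec, dotProduct, key]

lemma Pim_mulVec_left (n : ℕ) (hn : 0 < n) (a b : Fin n → ℂ) (i : Fin n) :
    (Pim n).mulVec a i = symb n hn a b ((i : ℤ) + 1) := by
  rw [Pim_mulVec_apply n hn, symb, if_pos (by omega)]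
  rfl

lemma Pim_mulVec_right (n : ℕ) (hn : 0 < n) (a b : Fin n → ℂ) (i : Fin n) :
    (Pim n).mulVec b i = symb n hn a b (-((i : ℤ) + 1)) := by
  rw [Pim_mulVec_apply n hn, symb, if_neg (by omega)]
  congr 2

lemma sum_mul_Xtri (n : ℕ) (f : ℤ → ℂ) (j : Fin n) :
    ∑ k : Fin n, f k * Xtri n k j =
      (if 0 < (j : ℕ) then f ((j : ℤ) - 1) else 0) +
        (if (j : ℕ) + 1 < n then f ((j : ℤ) + 1) else 0) := by
  have hj := j.isLt
  have split : ∀ k : Fin n, f k * Xtri n k j =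
      (if (k : ℕ) + 1 = j then f k else 0) + (if (k : ℕ) = j + 1 then f k else 0) := by
    intro k
    simp only [Xtri, Matrix.of_apply]
    split_ifs <;> first | omega | simp
  simp only [split, Finset.sum_add_distrib]
  congr 1
  · split_ifs with h
    · rw [Finset.sum_eq_single ⟨(j : ℕ) - 1, by omega⟩]
      · rw [if_pos (by simp only; omega)]
        congr 1
        simp only
        omega
      · intro k _ hk
        rw [if_neg]
        intro h'
        exact hk (Fin.ext (by simp only; omega))
      · simp
    · exact Finset.sum_eq_zero fun k _ => if_neg (by omega)
  · split_ifs with h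
    · rw [Finset.sum_eq_single ⟨(j : ℕ) + 1, h⟩]
      · simp
      · intro k _ hk
        rw [if_neg]
        intro h'
        exact hk (Fin.ext h')
      · simp
    · exact Finset.sum_eq_zero fun k _ => if_neg (by have := k.isLt; omega)

lemma Xtri_comm (n : ℕ) (i j : Fin n) : Xtri n i j = Xtri n j i := by
  simp only [Xtri, Matrix.of_apply, or_comm]

lemma Jm_conj_apply (n : ℕ) (M : Matrix (Fin n) (Fin n) ℂ) (i j : Fin n) :
    (Jm n * M * Jm n) i j = M i.rev j.rev := by
  have hl : ∀ i k : Fin n, Jm n i k = if k = i.rev then 1 else 0 := by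
    intro i k
    have hi := i.isLt
    have hk := k.isLt
    simp only [Jm, Matrix.of_apply, Fin.ext_iff, Fin.val_rev]
    split_ifs <;> first | rfl | omega
  have hr : ∀ k j : Fin n, Jm n k j = if k = j.rev then 1 else 0 := by
    intro k j
    have hk := k.isLt
    have hj := j.isLt
    simp only [Jm, Matrix.of_apply, Fin.ext_iff, Fin.val_rev]
    split_ifs <;> first | rfl | omega
  rw [Matrix.mul_apply]
  simp only [hr _ j, mul_ite, mul_one, mul_zero, Finset.sum_ite_eq', Finset.mem_univ, if_true]
  rw [Matrix.mul_apply]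
  simp [hl i]

theorem toeplitz_commutator_X (n : ℕ) (hn : 2 ≤ n) (a b : Fin n → ℂ)
    (hab : a ⟨0, by omega⟩ = b ⟨0, by omega⟩) :
    Tmat n a b * Xtri n - Xtri n * Tmat n a b =
      Theta n a b - Jm n * (Theta n a b)ᵀ * Jm n := by
  have h0 : 0 < n := by omega
  set t := symb n h0 a b with ht
  ext i j
  have hi := i.isLt
  have hj := j.isLt
  have hTX : (Tmat n a b * Xtri n) i j =
      (if 0 < (j : ℕ) then t ((i : ℤ) - j + 1) else 0) +
        (if (j : ℕ) + 1 < n then t ((i : ℤ) - j - 1) else 0) := by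
    simp only [Matrix.mul_apply, Tmat_apply_eq_symb n h0]
    rw [sum_mul_Xtri n (fun k => symb n h0 a b ((i : ℤ) - k)) j]
    simp only [ht, sub_sub_eq_add_sub, sub_add_eq_sub_sub, add_sub_right_comm]
  have hXT : (Xtri n * Tmat n a b) i j =
      (if 0 < (i : ℕ) then t ((i : ℤ) - j - 1) else 0) +
        (if (i : ℕ) + 1 < n then t ((i : ℤ) - j + 1) else 0) := by
    simp only [Matrix.mul_apply, Tmat_apply_eq_symb n h0, Xtri_comm n i, mul_comm (Xtri n _ _)]
    rw [sum_mul_Xtri n (fun k => symb n h0 a b (k - (j : ℤ))) i]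
    simp only [ht, sub_right_comm, add_sub_right_comm]
  have hΘ : ∀ p q : Fin n, Theta n a b p q =
      (if (p : ℕ) = 0 then t (-((q : ℤ) + 1)) else 0) -
        (if (q : ℕ) = 0 then t ((p : ℤ) + 1) else 0) := by
    intro p q
    simp only [Theta, Matrix.sub_apply, Matrix.vecMulVec_apply, Pim_mulVec_left n h0 a b,
      Pim_mulVec_right n h0 a b, e0, ite_mul, mul_ite, one_mul, mul_one, zero_mul, mul_zero, ht]
  rw [Matrix.sub_apply, Matrix.sub_apply, Jm_conj_apply, Matrix.transpose_apply, hTX, hXT, hΘ, hΘ]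
  -- Each boundary condition fixes `i` or `j`, which identifies the argument of `t` with `i - j ± 1`.
  have e1 : (if (i : ℕ) = 0 then t (-((j : ℤ) + 1)) else 0) =
      if (i : ℕ) = 0 then t ((i : ℤ) - j - 1) else 0 := by
    split_ifs
    · congr 1; omega
    · rfl
  have e2 : (if (j : ℕ) = 0 then t ((i : ℤ) + 1) else 0) =
      if (j : ℕ) = 0 then t ((i : ℤ) - j + 1) else 0 := by
    split_ifs
    · congr 1; omega
    · rfl
  have e3 : (if (j.rev : ℕ) = 0 then t (-((i.rev : ℕ) + 1 : ℤ)) else 0) =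
      if (j : ℕ) + 1 = n then t ((i : ℤ) - j - 1) else 0 := by
    simp only [Fin.val_rev]
    split_ifs
    · congr 1; omega
    · omega
    · omega
    · rfl
  have e4 : (if (i.rev : ℕ) = 0 then t ((j.rev : ℕ) + 1 : ℤ) else 0) =
      if (i : ℕ) + 1 = n then t ((i : ℤ) - j + 1) else 0 := by
    simp only [Fin.val_rev]
    split_ifs
    · congr 1; omega
    · omega
    · omega
    · rfl
  rw [e1, e2, e3, e4]
  generalize t ((i : ℤ) - j + 1) = x
  generalize t ((i : ℤ) - j - 1) = y
  split_ifs <;> first | omega | ring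
end

section
/- Let n ≥ 2 and let c, d ∈ ℂ^n with c_{n−1} = d_0. Then [H_n(c,d), X] = Θ(d, Jc) J − J Θ(d, Jc)^T, where Θ(a,b) = e_0 (Π b)^T − (Π a) e_0^T. -/
/-!
Both `Hmat n c d` and `Xtri n` are symmetric, so `X H = (H X)ᵀ`, and the claim is an identity of
entries. With `h` the sequence of antidiagonal values of the Hankel matrix, the `(i, j)` entry of
`H X` is `h (i + j - 1) + h (i + j + 1)`, where the first term is dropped when `j = 0` and the
second when `j = n - 1` (`mul_Xtri_apply`). In the commutator everything cancels except along
the border of the matrix, where `c` shifted by one appears in the first row and column and `d`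
shifted by one in the last row and column. On the other side, right multiplication by `J` reverses
columns, so `Θ(d, Jc) J` is supported on the first row and the last column
(`Theta_mul_Jm_apply`), and `J Θᵀ` is the transpose of `Θ J`. Comparing the border entries gives
the result; the spurious wrap-around terms of `Π` sit at the corners `(0, 0)` and `(n-1, n-1)`,
where they cancel against their transposes.
-/

open Matrix

/-- The Hankel matrix with first row `cᵀ` and last column `d` (where `c (n-1) = d 0`). -/
def Hmat (n : ℕ) (c d : Fin n → ℂ) : Matrix (Fin n) (Fin n) ℂ :=
  Matrix.of fun (i j : Fin n) =>
    if h : (i : ℕ) + (j : ℕ) ≤ n - 1 then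
      c ⟨(i : ℕ) + (j : ℕ), by have := i.isLt; omega⟩
    else
      d ⟨(i : ℕ) + (j : ℕ) - (n - 1), by have := i.isLt; have := j.isLt; omega⟩

theorem Jm_mulVec_apply (n : ℕ) (v : Fin n → ℂ) (i : Fin n) :
    (Jm n).mulVec v i = v i.rev := by
  have key : ∀ k : Fin n, ((i : ℕ) + (k : ℕ) = n - 1) ↔ k = i.rev := by
    intro k; rw [Fin.ext_iff, Fin.val_rev]; omega
  simp [Matrix.mulVec, dotProduct, Jm, key]

theorem mul_Jm_apply (n : ℕ) (M : Matrix (Fin n) (Fin n) ℂ) (i j : Fin n) :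
    (M * Jm n) i j = M i j.rev := by
  have key : ∀ k : Fin n, ((k : ℕ) + (j : ℕ) = n - 1) ↔ k = j.rev := by
    intro k; rw [Fin.ext_iff, Fin.val_rev]; omega
  simp [Matrix.mul_apply, Jm, key]

theorem Jm_transpose (n : ℕ) : (Jm n)ᵀ = Jm n := by
  ext i j; simp [Jm, add_comm]

theorem Xtri_transpose (n : ℕ) : (Xtri n)ᵀ = Xtri n := by
  ext i j; simp [Xtri, or_comm]

theorem Hmat_transpose (n : ℕ) (c d : Fin n → ℂ) : (Hmat n c d)ᵀ = Hmat n c d := by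
  ext i j; simp [Hmat, add_comm]

/-- `Π` shifts a vector cyclically, its last entry becoming the former entry `0`. -/
theorem Pim_mulVec_apply_s5 (n : ℕ) (v : Fin n → ℂ) (i : Fin n) :
    (Pim n).mulVec v i =
      if h : (i : ℕ) + 1 < n then v ⟨i + 1, h⟩ else v ⟨0, i.pos⟩ := by
  have hi := i.isLt
  split_ifs with h
  · have key : ∀ k : Fin n, Pim n i k = if k = ⟨i + 1, h⟩ then 1 else 0 := by
      intro k; simp only [Pim, Matrix.of_apply, Fin.ext_iff]; grind
    simp [Matrix.mulVec, dotProduct, key]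
  · have key : ∀ k : Fin n, Pim n i k = if k = ⟨0, i.pos⟩ then 1 else 0 := by
      intro k; simp only [Pim, Matrix.of_apply, Fin.ext_iff]; grind
    simp [Matrix.mulVec, dotProduct, key]

/-- Right multiplication by `X` replaces each column by the sum of its neighbouring columns. The
index `j - 1` is truncated at `j = 0`, where the guard `1 ≤ j` discards that term. -/
theorem mul_Xtri_apply (n : ℕ) (M : Matrix (Fin n) (Fin n) ℂ) (i j : Fin n) :
    (M * Xtri n) i j =
      (if 1 ≤ (j : ℕ) then M i ⟨j - 1, by omega⟩ else 0) +
        (if h : (j : ℕ) + 1 < n then M i ⟨j + 1, h⟩ else 0) := by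
  have key : ∀ k : Fin n, M i k * Xtri n k j =
      (if k = ⟨j - 1, by omega⟩ then (if 1 ≤ (j : ℕ) then M i k else 0) else 0) +
        (if h : (j : ℕ) + 1 < n then (if k = ⟨j + 1, h⟩ then M i k else 0) else 0) := by
    intro k
    simp only [Xtri, Matrix.of_apply, Fin.ext_iff]
    split_ifs <;> first | omega | simp
  rw [Matrix.mul_apply, Finset.sum_congr rfl fun k _ => key k, Finset.sum_add_distrib]
  congr 1
  · simp
  · split_ifs with h <;> simp

/-- `Θ(d, Jc) J` has `c` shifted by one in row `0` and minus `d` shifted by one in column `n - 1`;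
the `else` branches of the two inner conditionals are the wrap-around terms of `Π`. -/
theorem Theta_mul_Jm_apply (n : ℕ) (c d : Fin n → ℂ) (i j : Fin n) :
    (Theta n d ((Jm n).mulVec c) * Jm n) i j =
      (if (i : ℕ) = 0 then
        (if 1 ≤ (j : ℕ) then c ⟨j - 1, by omega⟩ else c ⟨n - 1, by have := i.isLt; omega⟩) else 0) -
      (if (j : ℕ) = n - 1 then
        (if h : (i : ℕ) + 1 < n then d ⟨i + 1, h⟩ else d ⟨0, i.pos⟩) else 0) := by
  have hj : ((j.rev : Fin n) : ℕ) = 0 ↔ (j : ℕ) = n - 1 := by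
    rw [Fin.val_rev]; omega
  have hc : (Pim n).mulVec ((Jm n).mulVec c) j.rev =
      if 1 ≤ (j : ℕ) then c ⟨j - 1, by omega⟩ else c ⟨n - 1, by have := i.isLt; omega⟩ := by
    rw [Pim_mulVec_apply_s5]
    simp only [Jm_mulVec_apply]
    split_ifs with h1 h2 h2
    all_goals rw [Fin.val_rev] at h1
    all_goals first | omega | (refine congrArg c (Fin.ext ?_); simp only [Fin.val_rev] <;> omega)
  rw [mul_Jm_apply]
  simp only [Theta, Matrix.sub_apply, Matrix.vecMulVec_apply, hc, e0, hj]
  rw [Pim_mulVec_apply_s5]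
  simp only [ite_mul, one_mul, zero_mul, mul_ite, mul_one, mul_zero]
  split_ifs <;> rfl

theorem hankel_commutator_X (n : ℕ) (hn : 2 ≤ n) (c d : Fin n → ℂ)
    (hcd : c ⟨n - 1, by omega⟩ = d ⟨0, by omega⟩) :
    Hmat n c d * Xtri n - Xtri n * Hmat n c d =
      Theta n d ((Jm n).mulVec c) * Jm n - Jm n * (Theta n d ((Jm n).mulVec c))ᵀ := by
  have hX : Xtri n * Hmat n c d = (Hmat n c d * Xtri n)ᵀ := by
    rw [Matrix.transpose_mul, Xtri_transpose, Hmat_transpose]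
  have hJ : Jm n * (Theta n d ((Jm n).mulVec c))ᵀ =
      (Theta n d ((Jm n).mulVec c) * Jm n)ᵀ := by
    rw [Matrix.transpose_mul, Jm_transpose]
  rw [hX, hJ]
  ext i j
  simp only [Matrix.sub_apply, Matrix.transpose_apply, mul_Xtri_apply, Theta_mul_Jm_apply]
  -- It remains to split on the position of `(i, j)` relative to the border and the antidiagonal.
  simp only [Hmat, Matrix.of_apply]
  grind
end

section
/- Let n ≥ 1, let λ ∈ ℂ with λ ≠ 0, and let φ ∈ ℂ with λ^n ≠ φ. Then the matrix P = Z_n(λ) − (λ^n/(λ^n − φ)) · p(λ) p(λ^{−1})^T commutes with Π_φ. Consequently Z_n(λ) = P + R where P commutes with Π_φ and rank R ≤ 1. -/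
/-!
Both `Z_n(λ)` and the rank-one matrix have entries of the form `λ^{i-j} * t`, so
`P i j = λ^{i-j} * (if j ≤ i then b else a)` with `c = λ^n / (λ^n - φ)`, `a = -c`, `b = 1 - c`.
Multiplication by `Π_φ` on the right shifts columns cyclically and on the left shifts rows,
weighting the entry that wraps around by `φ`. A Toeplitz matrix therefore commutes with `Π_φ` as soon
as its diagonals wrap with weight `φ`, which here is the single scalar identity `φ * a = λ^n * b`;
the constant `c` is the one satisfying it. The difference `Z_n(λ) - P` is a multiple of an outer
product, hence of rank at most one.
-/

open Matrix

/-- `Π_φ`: ones on the superdiagonal and `φ` in the bottom-left corner. -/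
def Piphi (n : ℕ) (φ : ℂ) : Matrix (Fin n) (Fin n) ℂ :=
  Matrix.of fun (i j : Fin n) => if (j : ℕ) = (i : ℕ) + 1 then 1
    else if (i : ℕ) = n - 1 ∧ (j : ℕ) = 0 then φ else 0

/-- The vector `p(λ) = (1, λ, λ², …, λ^{n-1})ᵀ`. -/
def pvec (n : ℕ) (l : ℂ) : Fin n → ℂ := fun k => l ^ (k : ℕ)

/-- The lower triangular Toeplitz matrix `Z_n(λ)` with entries `λ^{i-j}` for `i ≥ j`. -/
def Zmat (n : ℕ) (l : ℂ) : Matrix (Fin n) (Fin n) ℂ :=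
  Matrix.of fun (i j : Fin n) =>
    if (j : ℕ) ≤ (i : ℕ) then l ^ ((i : ℕ) - (j : ℕ)) else 0

theorem mul_Piphi_zero (m : ℕ) (φ : ℂ) (P : Matrix (Fin (m + 1)) (Fin (m + 1)) ℂ)
    (i : Fin (m + 1)) : (P * Piphi (m + 1) φ) i 0 = P i (Fin.last m) * φ := by
  have h : ∀ k : Fin (m + 1), Piphi (m + 1) φ k 0 = if k = Fin.last m then φ else 0 := by
    intro k
    simp only [Piphi, Matrix.of_apply, Fin.ext_iff, Fin.val_last, Fin.val_zero]
    grind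
  simp [Matrix.mul_apply, h]

theorem mul_Piphi_succ (m : ℕ) (φ : ℂ) (P : Matrix (Fin (m + 1)) (Fin (m + 1)) ℂ)
    (i : Fin (m + 1)) (j : Fin m) :
    (P * Piphi (m + 1) φ) i j.succ = P i j.castSucc := by
  have h : ∀ k : Fin (m + 1),
      Piphi (m + 1) φ k j.succ = if k = j.castSucc then 1 else 0 := by
    intro k
    simp only [Piphi, Matrix.of_apply, Fin.ext_iff, Fin.val_succ, Fin.val_castSucc]
    grind
  simp [Matrix.mul_apply, h]

theorem Piphi_mul_last (m : ℕ) (φ : ℂ) (P : Matrix (Fin (m + 1)) (Fin (m + 1)) ℂ)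
    (j : Fin (m + 1)) : (Piphi (m + 1) φ * P) (Fin.last m) j = φ * P 0 j := by
  have h : ∀ k : Fin (m + 1), Piphi (m + 1) φ (Fin.last m) k = if k = 0 then φ else 0 := by
    intro k
    simp only [Piphi, Matrix.of_apply, Fin.ext_iff, Fin.val_last, Fin.val_zero]
    grind
  simp [Matrix.mul_apply, h]

theorem Piphi_mul_castSucc (m : ℕ) (φ : ℂ) (P : Matrix (Fin (m + 1)) (Fin (m + 1)) ℂ)
    (i : Fin m) (j : Fin (m + 1)) :
    (Piphi (m + 1) φ * P) i.castSucc j = P i.succ j := by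
  have h : ∀ k : Fin (m + 1),
      Piphi (m + 1) φ i.castSucc k = if k = i.succ then 1 else 0 := by
    intro k
    simp only [Piphi, Matrix.of_apply, Fin.ext_iff, Fin.val_succ, Fin.val_castSucc]
    grind
  simp [Matrix.mul_apply, h]

/-- A matrix with entries `l^{i-j} * b` on and below the diagonal and `l^{i-j} * a` above it
commutes with `Π_φ` when its diagonals wrap around with weight `φ`. -/
theorem commute_Piphi_of_entries (m : ℕ) (l φ a b : ℂ) (hl : l ≠ 0)
    (hab : φ * a = l ^ (m + 1) * b) (P : Matrix (Fin (m + 1)) (Fin (m + 1)) ℂ)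
    (hP : ∀ i j, P i j = l ^ (i : ℕ) * l⁻¹ ^ (j : ℕ) * if (j : ℕ) ≤ (i : ℕ) then b else a) :
    P * Piphi (m + 1) φ = Piphi (m + 1) φ * P := by
  have hlm : l ^ m * l⁻¹ ^ m = 1 := by rw [← mul_pow, mul_inv_cancel₀ hl, one_pow]
  have hl1 : l * l⁻¹ = 1 := mul_inv_cancel₀ hl
  ext i j
  induction j using Fin.cases with
  | zero =>
    rw [mul_Piphi_zero]
    induction i using Fin.lastCases with
    | last =>
      rw [Piphi_mul_last, hP, hP]
      simp only [Fin.val_last, Fin.val_zero, le_refl, if_true, hlm]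
      ring
    | cast i =>
      rw [Piphi_mul_castSucc, hP, hP]
      simp only [Fin.val_last, Fin.val_castSucc, Fin.val_succ, Fin.val_zero, Nat.zero_le, if_true,
        if_neg (not_le.2 i.isLt)]
      linear_combination l ^ (i : ℕ) * l⁻¹ ^ m * hab + l ^ ((i : ℕ) + 1) * b * hlm
  | succ j =>
    rw [mul_Piphi_succ]
    induction i using Fin.lastCases with
    | last =>
      have h : ¬((j.succ : Fin (m + 1)) : ℕ) ≤ ((0 : Fin (m + 1)) : ℕ) := by simp
      rw [Piphi_mul_last, hP, hP, if_neg h]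
      simp only [Fin.val_last, Fin.val_castSucc, Fin.val_succ, Fin.val_zero, if_pos j.isLt.le]
      linear_combination - l⁻¹ ^ ((j : ℕ) + 1) * hab - l ^ m * l⁻¹ ^ (j : ℕ) * b * hl1
    | cast i =>
      rw [Piphi_mul_castSucc, hP, hP]
      simp only [Fin.val_castSucc, Fin.val_succ, Nat.add_le_add_iff_right]
      linear_combination
        - l ^ (i : ℕ) * l⁻¹ ^ (j : ℕ) * (if (j : ℕ) ≤ (i : ℕ) then b else a) * hl1

theorem Zn_circulant_plus_rank_one (n : ℕ) (hn : 1 ≤ n) (l φ : ℂ)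
    (hl : l ≠ 0) (hlφ : l ^ n ≠ φ)
    (P : Matrix (Fin n) (Fin n) ℂ)
    (hP : P = Zmat n l -
      (l ^ n / (l ^ n - φ)) • Matrix.vecMulVec (pvec n l) (pvec n l⁻¹)) :
    P * Piphi n φ = Piphi n φ * P ∧ (Zmat n l - P).rank ≤ 1 := by
  subst hP
  have hd : l ^ n - φ ≠ 0 := sub_ne_zero.2 hlφ
  constructor
  · obtain ⟨m, rfl⟩ : ∃ m, n = m + 1 := ⟨n - 1, by omega⟩
    refine commute_Piphi_of_entries m l φ (-(l ^ (m + 1) / (l ^ (m + 1) - φ)))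
      (1 - l ^ (m + 1) / (l ^ (m + 1) - φ)) hl (by field_simp; ring) _ fun i j => ?_
    simp only [Zmat, pvec, Matrix.sub_apply, Matrix.smul_apply, Matrix.of_apply,
      Matrix.vecMulVec_apply, smul_eq_mul]
    split_ifs with h
    · rw [pow_sub₀ l hl h, ← inv_pow]
      ring
    · ring
  · rw [sub_sub_cancel, ← Matrix.smul_vecMulVec]
    exact Matrix.rank_vecMulVec_le _ _
end

section
/- Let n ≥ 2 and λ ∈ ℝ, and let K_n(λ) be the real symmetric matrix with entries K_n(λ)_{ij} = λ^{|i−j|}. Then K_n(λ) is positive definite if and only if |λ| < 1. -/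
/-!
Split off the first coordinate: with `w x = ∑ lⁱ xᵢ` and `Q` the quadratic form of the matrix,
`Q (a, y) = a² + 2 a l w(y) + Q y` and `w (a, y) = a + l w(y)`, whence
`Q (a, y) - l² w(a, y)² = (1 - l²) w(a, y)² + (Q y - l² w(y)²)`.
For `|l| < 1`, induction on the size shows `Q - l² w²`, and hence `Q`, to be positive definite
(`KMSR_quadForm_gap_pos`). Conversely, the leading `2 × 2` principal minor is `1 - l²`, which must
be positive.
-/

open Matrix

/-- The Kac–Murdock–Szegő matrix `K_n(λ)` with entries `λ^{|i-j|}` (real entries). -/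
def KMSR (n : ℕ) (l : ℝ) : Matrix (Fin n) (Fin n) ℝ :=
  Matrix.of fun (i j : Fin n) => l ^ ((i : ℤ) - (j : ℤ)).natAbs

theorem KMSR_quadForm_succ (n : ℕ) (l : ℝ) (x : Fin (n + 1) → ℝ) :
    ∑ i, ∑ j, x i * KMSR (n + 1) l i j * x j =
      x 0 ^ 2 + 2 * x 0 * (l * ∑ i : Fin n, l ^ (i : ℕ) * x i.succ) +
        ∑ i : Fin n, ∑ j : Fin n, x i.succ * KMSR n l i j * x j.succ := by
  have h00 : KMSR (n + 1) l 0 0 = 1 := by simp [KMSR]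
  have h0s (j : Fin n) : KMSR (n + 1) l 0 j.succ = l * l ^ (j : ℕ) := by
    have : ((0 : ℤ) - ((j : ℕ) + 1 : ℤ)).natAbs = (j : ℕ) + 1 := by omega
    simp only [KMSR, Matrix.of_apply, Fin.val_zero, Fin.val_succ, Nat.cast_zero, Nat.cast_add,
      Nat.cast_one, this, pow_succ']
  have hs0 (j : Fin n) : KMSR (n + 1) l j.succ 0 = l * l ^ (j : ℕ) := by
    have : (((j : ℕ) + 1 : ℤ) - 0).natAbs = (j : ℕ) + 1 := by omega
    simp only [KMSR, Matrix.of_apply, Fin.val_zero, Fin.val_succ, Nat.cast_zero, Nat.cast_add,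
      Nat.cast_one, this, pow_succ']
  have hss (i j : Fin n) : KMSR (n + 1) l i.succ j.succ = KMSR n l i j := by
    simp [KMSR]
  simp only [Fin.sum_univ_succ, h00, h0s, hs0, hss, Finset.sum_add_distrib]
  have e1 : ∑ j : Fin n, x 0 * (l * l ^ (j : ℕ)) * x j.succ =
      x 0 * (l * ∑ i : Fin n, l ^ (i : ℕ) * x i.succ) := by
    simp only [Finset.mul_sum]
    exact Finset.sum_congr rfl fun _ _ => by ring
  have e2 : ∑ j : Fin n, x j.succ * (l * l ^ (j : ℕ)) * x 0 =
      x 0 * (l * ∑ i : Fin n, l ^ (i : ℕ) * x i.succ) := by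
    simp only [Finset.mul_sum]
    exact Finset.sum_congr rfl fun _ _ => by ring
  rw [e1, e2]
  ring

/-- Strengthening of positivity of the quadratic form that is stable under induction on `n`. -/
theorem KMSR_quadForm_gap_pos (l : ℝ) (hl : l ^ 2 < 1) (n : ℕ) (x : Fin n → ℝ) (hx : x ≠ 0) :
    l ^ 2 * (∑ i : Fin n, l ^ (i : ℕ) * x i) ^ 2 < ∑ i, ∑ j, x i * KMSR n l i j * x j := by
  induction n with
  | zero => exact absurd (Subsingleton.elim x 0) hx
  | succ n ih =>
    have hw : ∑ i : Fin (n + 1), l ^ (i : ℕ) * x i =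
        x 0 + l * ∑ i : Fin n, l ^ (i : ℕ) * x i.succ := by
      rw [Fin.sum_univ_succ, Finset.mul_sum]
      simp [pow_succ', mul_assoc]
    rw [KMSR_quadForm_succ, hw]
    by_cases hy : (fun i : Fin n => x i.succ) = 0
    · have hy' (i : Fin n) : x i.succ = 0 := congrFun hy i
      have h0 : x 0 ≠ 0 := fun h => hx (funext fun i => Fin.cases h hy' i)
      have : 0 < x 0 ^ 2 := by positivity
      simp only [hy', mul_zero, zero_mul, Finset.sum_const_zero, add_zero]
      nlinarith
    · have h := ih _ hy
      set w := ∑ i : Fin n, l ^ (i : ℕ) * x i.succ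
      nlinarith [mul_nonneg (sub_nonneg.2 hl.le) (sq_nonneg (x 0 + l * w))]

theorem KMS_posDef_iff (n : ℕ) (hn : 2 ≤ n) (l : ℝ) :
    (KMSR n l).PosDef ↔ |l| < 1 := by
  rw [← sq_lt_one_iff_abs_lt_one]
  constructor
  · intro h
    have h2 := (h.submatrix (Fin.castLE_injective hn)).det_pos
    simp [Matrix.det_fin_two, KMSR] at h2
    nlinarith
  · intro hl
    refine PosDef.of_dotProduct_mulVec_pos ?_ fun x hx => ?_
    · ext i j
      simp only [KMSR, Matrix.conjTranspose_apply, Matrix.of_apply, star_trivial]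
      rw [← Int.natAbs_neg, neg_sub]
    · have h := KMSR_quadForm_gap_pos l hl n x hx
      have e : star x ⬝ᵥ (KMSR n l *ᵥ x) = ∑ i, ∑ j, x i * KMSR n l i j * x j := by
        simp [dotProduct, mulVec, Finset.mul_sum, mul_assoc]
      rw [e]
      exact lt_of_le_of_lt (by positivity) h
end

section
/- Let n ≥ 1, let λ ∈ ℝ with λ ≠ 0, and let φ ∈ {1, −1} with λ^n ≠ φ. Then there exists a real matrix H with H^T = H and H Π_φ = Π_φ H (i.e., H is a symmetric φ-circulant, hence an element of every Hartley-type algebra containing the symmetric φ-circulants) such that rank( K_n(λ) − H ) ≤ 2. -/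
/-!
A symmetric Toeplitz matrix `H i j = h |i - j|` is a symmetric `φ`-circulant as soon as
`φ h(d) = h(n - d)` for `0 ≤ d ≤ n` (`kmsSymbol_reflect`, `toeplitz_mul_Piphi`). Among the
combinations of `λ^d` and `λ^(-d)`, those of the form `h(d) = a λ^d + b λ^(-d)` with `b = φ a λ^n`
satisfy this reflection rule, because `φ² = 1`. The difference `K_n(λ) - H` has entries
`(1 - a) λ^d - b λ^(-d)` with `d = |i - j|`; when `1 - a = -b` this is symmetric in `d ↦ -d`, so
it equals `c (λ^i λ^(-j) + λ^(-i) λ^j)` with `c = -b`, which factors through `ℝ²`. The two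
conditions together give `c = -φ λ^n / (1 - φ λ^n)`, where `1 - φ λ^n ≠ 0` because `λ^n ≠ φ`.
-/

open Matrix

/-- `Π_φ` over the reals: ones on the superdiagonal and `φ` in the bottom-left corner. -/
def PiphiR (n : ℕ) (φ : ℝ) : Matrix (Fin n) (Fin n) ℝ :=
  Matrix.of fun (i j : Fin n) => if (j : ℕ) = (i : ℕ) + 1 then 1
    else if (i : ℕ) = n - 1 ∧ (j : ℕ) = 0 then φ else 0

/-- The sequence `h(d) = λ^d - c (λ^d + λ^(-d))`, `c = -φ λ^n / (1 - φ λ^n)`, that generates the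
symmetric `φ`-circulant. -/
noncomputable def kmsSymbol (n : ℕ) (l φ : ℝ) (d : ℕ) : ℝ :=
  l ^ d - (-(φ * l ^ n) / (1 - φ * l ^ n)) * (l ^ d + (l ^ d)⁻¹)

theorem kmsSymbol_reflect {n : ℕ} {l φ : ℝ} (hl : l ≠ 0) (hφ : φ * φ = 1)
    (hlφ : 1 - φ * l ^ n ≠ 0) {d e : ℕ} (hde : d + e = n) :
    φ * kmsSymbol n l φ d = kmsSymbol n l φ e := by
  subst hde
  have hd : l ^ d ≠ 0 := pow_ne_zero _ hl
  have he : l ^ e ≠ 0 := pow_ne_zero _ hl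
  unfold kmsSymbol
  rw [pow_add] at *
  generalize l ^ d = x at *
  generalize l ^ e = y at *
  rw [← mul_assoc] at *
  field_simp
  linear_combination y * hφ

/-- Left multiplication by `Π_φ` shifts the rows up; the first row, times `φ`, becomes the last. -/
theorem Piphi_mul_apply {m : ℕ} (φ : ℝ) (A : Matrix (Fin (m + 1)) (Fin (m + 1)) ℝ)
    (i j : Fin (m + 1)) :
    (PiphiR (m + 1) φ * A) i j =
      if h : (i : ℕ) < m then A ⟨i + 1, by omega⟩ j else φ * A 0 j := by
  rw [Matrix.mul_apply]
  split_ifs with h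
  · rw [Finset.sum_eq_single (⟨i + 1, by omega⟩ : Fin (m + 1))]
    · simp [PiphiR]
    · intro k _ hk
      have h1 : (k : ℕ) ≠ i + 1 := fun e => hk (Fin.ext e)
      have h2 : (i : ℕ) ≠ m := by omega
      simp [PiphiR, h1, h2]
    · simp
  · have hi : (i : ℕ) = m := by omega
    rw [Finset.sum_eq_single (0 : Fin (m + 1))]
    · simp [PiphiR, hi]
    · intro k _ hk
      have h1 : (k : ℕ) ≠ m + 1 := by omega
      simp [PiphiR, hi, h1, hk]
    · simp

/-- Right multiplication by `Π_φ` shifts the columns to the right; the last column, times `φ`,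
becomes the first. -/
theorem mul_Piphi_apply {m : ℕ} (φ : ℝ) (A : Matrix (Fin (m + 1)) (Fin (m + 1)) ℝ)
    (i j : Fin (m + 1)) :
    (A * PiphiR (m + 1) φ) i j =
      if (j : ℕ) = 0 then φ * A i (Fin.last m) else A i ⟨j - 1, by omega⟩ := by
  rw [Matrix.mul_apply]
  split_ifs with h
  · have h0 : j = 0 := Fin.ext h
    rw [Finset.sum_eq_single (Fin.last m)]
    · simp [PiphiR, h0, mul_comm]
    · intro k _ hk
      have h1 : (k : ℕ) ≠ m := fun e => hk (Fin.ext e)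
      simp [PiphiR, h, h1]
    · simp
  · rw [Finset.sum_eq_single (⟨j - 1, by omega⟩ : Fin (m + 1))]
    · have : (j : ℕ) = j - 1 + 1 := by omega
      simp [PiphiR, ← this]
    · intro k _ hk
      have h1 : (j : ℕ) ≠ k + 1 := fun e => hk (Fin.ext (by simp; omega))
      have h2 : j ≠ 0 := fun e => h (by simp [e])
      simp [PiphiR, h1, h2]
    · simp

/-- A symmetric Toeplitz matrix whose generating sequence satisfies `φ h(d) = h(n - d)` is a
`φ`-circulant. -/
theorem toeplitz_mul_Piphi {m : ℕ} {φ : ℝ} {h : ℕ → ℝ}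
    (hh : ∀ d e, d + e = m + 1 → φ * h d = h e) :
    (Matrix.of fun i j : Fin (m + 1) => h ((i : ℤ) - (j : ℤ)).natAbs) * PiphiR (m + 1) φ =
      PiphiR (m + 1) φ * Matrix.of fun i j : Fin (m + 1) => h ((i : ℤ) - (j : ℤ)).natAbs := by
  ext i j
  rw [Piphi_mul_apply, mul_Piphi_apply]
  have hi := i.isLt
  have hj := j.isLt
  split_ifs with h1 h2 h2
  · simp only [Matrix.of_apply, Fin.val_last]
    exact hh _ _ (by omega)
  · simp only [Matrix.of_apply, Fin.val_last, Fin.val_zero]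
    congr 2
    omega
  · simp only [Matrix.of_apply]
    congr 1
    omega
  · simp only [Matrix.of_apply, Fin.val_zero]
    exact (hh _ _ (by omega)).symm

theorem KMS_hartley_plus_rank_two (n : ℕ) (hn : 1 ≤ n) (l : ℝ) (hl : l ≠ 0)
    (φ : ℝ) (hφ : φ = 1 ∨ φ = -1) (hlφ : l ^ n ≠ φ) :
    ∃ H : Matrix (Fin n) (Fin n) ℝ,
      Hᵀ = H ∧ H * PiphiR n φ = PiphiR n φ * H ∧ (KMSR n l - H).rank ≤ 2 := by
  obtain ⟨m, rfl⟩ : ∃ m, n = m + 1 := ⟨n - 1, by omega⟩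
  have hφ2 : φ * φ = 1 := by rcases hφ with rfl | rfl <;> norm_num
  have hne : 1 - φ * l ^ (m + 1) ≠ 0 := fun h =>
    hlφ (by linear_combination (-φ) * h - l ^ (m + 1) * hφ2)
  refine ⟨Matrix.of fun i j : Fin (m + 1) => kmsSymbol (m + 1) l φ ((i : ℤ) - (j : ℤ)).natAbs, ?_,
    toeplitz_mul_Piphi fun d e => kmsSymbol_reflect hl hφ2 hne, ?_⟩
  · ext i j
    simp only [Matrix.transpose_apply, Matrix.of_apply]
    congr 1
    omega
  · set c : ℝ := -(φ * l ^ (m + 1)) / (1 - φ * l ^ (m + 1)) with hc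
    have key : KMSR (m + 1) l -
          (Matrix.of fun i j : Fin (m + 1) => kmsSymbol (m + 1) l φ ((i : ℤ) - (j : ℤ)).natAbs) =
        (Matrix.of fun i : Fin (m + 1) => ![c * l ^ (i : ℕ), c * (l ^ (i : ℕ))⁻¹]) *
          Matrix.of ![fun j : Fin (m + 1) => (l ^ (j : ℕ))⁻¹, fun j => l ^ (j : ℕ)] := by
      ext i j
      simp only [KMSR, kmsSymbol, Matrix.sub_apply, Matrix.mul_apply, Fin.sum_univ_two,
        Matrix.of_apply, Matrix.cons_val_zero, Matrix.cons_val_one, ← hc]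
      generalize (i : ℕ) = a
      generalize (j : ℕ) = b
      rcases le_total a b with h | h
      · obtain ⟨d, rfl⟩ := Nat.exists_eq_add_of_le h
        rw [show ((a : ℤ) - ((a + d : ℕ) : ℤ)).natAbs = d by omega, pow_add]
        field_simp
        ring
      · obtain ⟨d, rfl⟩ := Nat.exists_eq_add_of_le h
        rw [show (((b + d : ℕ) : ℤ) - (b : ℤ)).natAbs = d by omega, pow_add]
        field_simp
        ring
    rw [key]
    exact (Matrix.rank_mul_le_left _ _).trans (Matrix.rank_le_width _)
end
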